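/- arXiv:1005.1839 — 4 statements merged into one kernel-verified Lean document; each statement's English description precedes it below -/
import Mathlib

section
/- There exists a finite group G with subgroups A and B such that A and B are Gassmann equivalent (for every conjugacy class C of G, |A ∩ C| = |B ∩ C|) but A and B are not conjugate in G. -/
/-- A Klein four subgroup generated by two commuting involutions. -/
def kleinSub {G : Type} [Group G] (a b : G) (ha : a * a = 1) (hb : b * b = 1)
    (hab : b * a = a * b) : Subgroup G where
  carrier := {1, a, b, a * b}
  one_mem' := by simp
  mul_mem' := by
    have h1 : a * (a * b) = b := by rw [← mul_assoc, ha, one_mul]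
    have h2 : b * (a * b) = a := by rw [← mul_assoc, hab, mul_assoc, hb, mul_one]
    rintro x y (rfl | rfl | rfl | rfl) (rfl | rfl | rfl | rfl) <;>
      simp [ha, hb, hab, h1, h2, mul_assoc]
  inv_mem' := by
    have h1 : a⁻¹ = a := inv_eq_of_mul_eq_one_left ha
    have h2 : b⁻¹ = b := inv_eq_of_mul_eq_one_left hb
    rintro x (rfl | rfl | rfl | rfl) <;> simp [h1, h2, hab]

open Classical in
theorem kleinSub_card {G : Type} [Group G] (a b : G) (ha : a * a = 1) (hb : b * b = 1)
    (hab : b * a = a * b) (h1 : a ≠ 1) (h2 : b ≠ 1) (h3 : a ≠ b)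
    (c1 : IsConj a b) (c2 : IsConj a (a * b)) (g : G) :
    Nat.card ((kleinSub a b ha hb hab : Set G) ∩ {x : G | IsConj g x} : Set G) =
      (if g = 1 then 1 else 0) + (if IsConj g a then 3 else 0) := by
  have e1 : IsConj g b ↔ IsConj g a := ⟨fun h => h.trans c1.symm, fun h => h.trans c1⟩
  have e2 : IsConj g (a * b) ↔ IsConj g a := ⟨fun h => h.trans c2.symm, fun h => h.trans c2⟩
  have h4 : a * b ≠ 1 := fun h => h3 (mul_left_cancel (ha.trans h.symm))
  have hs : ((kleinSub a b ha hb hab : Set G) ∩ {x : G | IsConj g x} : Set G) =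
      (({1, a, b, a * b} : Finset G).filter (fun x => IsConj g x) : Finset G) := by
    ext x
    simp [kleinSub, ← SetLike.mem_coe]
  rw [hs, Nat.card_coe_set_eq, Set.ncard_coe_finset]
  by_cases hg : g = 1
  · subst hg
    simp [Finset.filter_insert, Finset.filter_singleton, -isConj_iff, h1, h2, h4]
  · by_cases hc : IsConj g a
    · simp [Finset.filter_insert, Finset.filter_singleton, -isConj_iff, hg, hc, e1, e2, h1, h2, h3]
    · simp [Finset.filter_insert, Finset.filter_singleton, -isConj_iff, hg, hc, e1, e2]

/-- There is a finite group with two Gassmann equivalent subgroups that are not conjugate. -/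
theorem exists_gassmann_not_conjugate :
    ∃ (G : Type) (_ : Group G) (_ : Fintype G) (A B : Subgroup G),
      (∀ g : G,
        Nat.card ((A : Set G) ∩ {x : G | IsConj g x} : Set G) =
        Nat.card ((B : Set G) ∩ {x : G | IsConj g x} : Set G)) ∧
      ¬ ∃ x : G, Subgroup.map (MulAut.conj x).toMonoidHom A = B := by
  let s : Fin 6 → Fin 6 → Equiv.Perm (Fin 6) := Equiv.swap
  refine ⟨Equiv.Perm (Fin 6), inferInstance, inferInstance,
    kleinSub (s 0 1 * s 2 3) (s 0 2 * s 1 3) (by decide) (by decide) (by decide),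
    kleinSub (s 0 1 * s 2 3) (s 0 1 * s 4 5) (by decide) (by decide) (by decide), ?_, ?_⟩
  · intro g
    rw [kleinSub_card _ _ _ _ _ (by decide) (by decide) (by decide)
      (isConj_iff.2 ⟨s 1 2, by decide⟩) (isConj_iff.2 ⟨s 1 3, by decide⟩),
      kleinSub_card _ _ _ _ _ (by decide) (by decide) (by decide)
      (isConj_iff.2 ⟨s 2 4 * s 3 5, by decide⟩) (isConj_iff.2 ⟨s 0 4 * s 1 5, by decide⟩)]
  · rintro ⟨x, hx⟩
    have key : ∀ y ∈ kleinSub (s 0 1 * s 2 3) (s 0 1 * s 4 5) (by decide) (by decide)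
        (by decide), y (x 4) = x 4 := by
      intro y hy
      rw [← hx] at hy
      obtain ⟨z, hz, rfl⟩ := hy
      have hz4 : z 4 = 4 := by
        rcases hz with rfl | rfl | rfl | rfl <;> decide
      simp [hz4]
    have k1 := key (s 0 1 * s 2 3) (Or.inr (Or.inl rfl))
    have k2 := key (s 0 1 * s 4 5) (Or.inr (Or.inr (Or.inl rfl)))
    have : ∀ i : Fin 6, (s 0 1 * s 2 3) i = i → (s 0 1 * s 4 5) i = i → False := by decide
    exact this _ k1 k2
end

section
/- Let a, b, c be the permutations of {0,…,6} given in cycle notation by a = (0 1)(2 5), b = (0 2)(4 3), c = (0 4)(1 6), and let a' = (0 4)(2 3), b' = (0 1)(4 6), c' = (0 2)(1 5). Let G be the subgroup of Sym(7) × Sym(7) generated by (a,a'), (b,b'), (c,c'). Then for every element (σ,τ) ∈ G, the number of fixed points of σ on {0,…,6} equals the number of fixed points of τ on {0,…,6}. -/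
open Equiv

/-- a = (0 1)(2 5) -/
def a : Perm (Fin 7) := swap 0 1 * swap 2 5
/-- b = (0 2)(4 3) -/
def b : Perm (Fin 7) := swap 0 2 * swap 4 3
/-- c = (0 4)(1 6) -/
def c : Perm (Fin 7) := swap 0 4 * swap 1 6
/-- a' = (0 4)(2 3) -/
def a' : Perm (Fin 7) := swap 0 4 * swap 2 3
/-- b' = (0 1)(4 6) -/
def b' : Perm (Fin 7) := swap 0 1 * swap 4 6
/-- c' = (0 2)(1 5) -/
def c' : Perm (Fin 7) := swap 0 2 * swap 1 5

/-- The subgroup of Sym(7) × Sym(7) generated by (a,a'), (b,b'), (c,c'). -/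
def G₀ : Subgroup (Perm (Fin 7) × Perm (Fin 7)) :=
  Subgroup.closure {(a, a'), (b, b'), (c, c')}

def incN : Fin 7 → Fin 7 → ℤ :=
  ![![0, 1, 1, 0, 1, 0, 0], ![1, 1, 0, 1, 0, 0, 0], ![1, 0, 1, 0, 0, 0, 1],
    ![0, 1, 0, 0, 0, 1, 1], ![1, 0, 0, 0, 1, 1, 0], ![0, 0, 0, 1, 1, 0, 1],
    ![0, 0, 1, 1, 0, 1, 0]]

/-- Six times the inverse of `incN`. -/
def incM (y x : Fin 7) : ℤ := 3 * incN x y - 1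

theorem incN_mul : ∀ u v : Fin 7, ∑ y, incN u y * incM y v = if u = v then 6 else 0 := by
  decide +kernel

theorem incM_mul : ∀ u v : Fin 7, ∑ x, incN x v * incM u x = if u = v then 6 else 0 := by
  decide +kernel

theorem incN_inv : ∀ p ∈ G₀, ∀ x y, incN (p.1 x) (p.2 y) = incN x y := by
  intro p hp
  induction hp using Subgroup.closure_induction with
  | mem p h =>
    rcases h with rfl | rfl | rfl <;> decide +kernel
  | one => intro x y; rfl
  | mul p q _ _ hp hq => intro x y; exact (hp _ _).trans (hq x y)
  | inv p _ hp =>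
    intro x y
    rw [← hp]
    simp

theorem six_mul_card (s : Perm (Fin 7)) :
    (∑ x, if s x = x then (6 : ℤ) else 0) = 6 * (Nat.card {x : Fin 7 // s x = x} : ℤ) := by
  rw [Nat.card_eq_fintype_card, Fintype.card_subtype, ← Finset.sum_filter]
  simp [mul_comm]

/-- For every element of `G₀`, the two coordinates have equally many fixed points. -/
theorem fixed_points_eq_of_mem_G₀ :
    ∀ p ∈ G₀, Nat.card {x : Fin 7 // p.1 x = x} = Nat.card {x : Fin 7 // p.2 x = x} := by
  intro p hp
  have key : (∑ x, if p.1 x = x then (6 : ℤ) else 0) = ∑ x, if p.2 x = x then (6 : ℤ) else 0 := by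
    calc (∑ x, if p.1 x = x then (6 : ℤ) else 0)
        = ∑ x, ∑ y, incN (p.1 x) y * incM y x := by simp only [incN_mul]
      _ = ∑ x, ∑ z, incN (p.1 x) (p.2 z) * incM (p.2 z) x := by
          refine Finset.sum_congr rfl fun x _ => ?_
          exact (Equiv.sum_comp p.2 fun y => incN (p.1 x) y * incM y x).symm
      _ = ∑ z, ∑ x, incN x z * incM (p.2 z) x := by
          rw [Finset.sum_comm]
          simp only [incN_inv p hp]
      _ = _ := by simp only [incM_mul]
  rw [six_mul_card, six_mul_card] at key
  omega
end

section
/- Let a, b, c be the permutations of {0,…,6} given in cycle notation by a = (0 1)(2 5), b = (0 2)(4 3), c = (0 4)(1 6), and a' = (0 4)(2 3), b' = (0 1)(4 6), c' = (0 2)(1 5). Let G be the subgroup of Sym(7) × Sym(7) generated by (a,a'), (b,b'), (c,c'). Then G has order 168, both coordinate actions of G on {0,…,6} are transitive, and the stabilizers A = {(σ,τ) ∈ G : σ(0) = 0} and B = {(σ,τ) ∈ G : τ(0) = 0} each have order 24 (hence index 7 in G). -/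
open Equiv

/-- A = {(σ,τ) ∈ G₀ : σ 0 = 0}, the point stabilizer in the first action. -/
def A : Subgroup G₀ where
  carrier := {g | (g : Perm (Fin 7) × Perm (Fin 7)).1 0 = 0}
  one_mem' := rfl
  mul_mem' := by
    intro x y hx hy
    simp only [Set.mem_setOf_eq] at *
    simp [Subgroup.coe_mul, Perm.mul_apply, hx, hy]
  inv_mem' := by
    intro x hx
    simp only [Set.mem_setOf_eq] at *
    conv_lhs => rw [← hx]
    simp

/-- B = {(σ,τ) ∈ G₀ : τ 0 = 0}, the point stabilizer in the second action. -/
def B : Subgroup G₀ where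
  carrier := {g | (g : Perm (Fin 7) × Perm (Fin 7)).2 0 = 0}
  one_mem' := rfl
  mul_mem' := by
    intro x y hx hy
    simp only [Set.mem_setOf_eq] at *
    simp [Subgroup.coe_mul, Perm.mul_apply, hx, hy]
  inv_mem' := by
    intro x hx
    simp only [Set.mem_setOf_eq] at *
    conv_lhs => rw [← hx]
    simp


/-- Incidence relation (point, line) of the Fano plane preserved by `G₀`. -/
def inc (x y : Fin 7) : Bool :=
  match x with
  | 0 => y == 1 || y == 2 || y == 4
  | 1 => y == 0 || y == 1 || y == 3
  | 2 => y == 0 || y == 2 || y == 6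
  | 3 => y == 1 || y == 5 || y == 6
  | 4 => y == 0 || y == 4 || y == 5
  | 5 => y == 3 || y == 4 || y == 6
  | 6 => y == 2 || y == 3 || y == 5

/-- Non-collinear triples. -/
def nonColl (t : Fin 7 × Fin 7 × Fin 7) : Prop :=
  ∀ l, ¬ (inc t.1 l = true ∧ inc t.2.1 l = true ∧ inc t.2.2 l = true)

instance : DecidablePred nonColl := fun t => by unfold nonColl; infer_instance

/-- The three generators. -/
def gen : Fin 3 → Perm (Fin 7) × Perm (Fin 7)
  | 2 => (c, c')
  | 1 => (b, b')
  | 0 => Prod.mk (snd := a') (fst := a)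

/-- Words in the generators. -/
def word (l : List (Fin 3)) : Perm (Fin 7) × Perm (Fin 7) := (l.map gen).prod

lemma word_mem (l : List (Fin 3)) : word l ∈ G₀ := by
  apply Subgroup.list_prod_mem
  intro x hx
  obtain ⟨i, -, rfl⟩ := List.mem_map.1 hx
  apply Subgroup.subset_closure
  fin_cases i <;> simp [gen]

lemma inc_pres {p : Perm (Fin 7) × Perm (Fin 7)} (hp : p ∈ G₀) :
    ∀ x y, inc (p.1 x) (p.2 y) = inc x y := by
  unfold G₀ at hp
  induction hp using Subgroup.closure_induction with
  | mem p h =>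
    simp only [Set.mem_insert_iff, Set.mem_singleton_iff] at h
    rcases h with rfl | rfl | rfl <;> decide
  | one => intro x y; rfl
  | mul p q _ _ hp hq =>
    intro x y
    simp only [Prod.fst_mul, Prod.snd_mul, Perm.mul_apply, hp, hq]
  | inv p _ hp =>
    intro x y
    rw [← hp]
    simp

lemma line_eq : (∀ l, inc 0 l = true → inc 1 l = true → l = 1) ∧
    (∀ l, inc 0 l = true → inc 2 l = true → l = 2) ∧
    (∀ l, inc 1 l = true → inc 2 l = true → l = 0) := by decide

lemma pt_eq : (∀ x, inc x 1 = true → x ≠ 0 → x ≠ 1 → x = 3) ∧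
    (∀ x, inc x 2 = true → x ≠ 0 → x ≠ 2 → x = 6) ∧
    (∀ x, inc x 0 = true → x ≠ 1 → x ≠ 2 → x = 4) ∧
    (∀ x : Fin 7, x ≠ 0 → x ≠ 1 → x ≠ 2 → x ≠ 3 → x ≠ 4 → x ≠ 6 → x = 5) := by
  refine ⟨by decide, by decide, by decide, fun x => ?_⟩
  omega

lemma line_ext : ∀ l m, (∀ x, inc x l = inc x m) → l = m := by decide

lemma rigid {p : Perm (Fin 7) × Perm (Fin 7)} (hp : p ∈ G₀)
    (h0 : p.1 0 = 0) (h1 : p.1 1 = 1) (h2 : p.1 2 = 2) : p = 1 := by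
  have H := inc_pres hp
  have l1 : p.2 1 = 1 := line_eq.1 _ (by have := H 0 1; rw [h0] at this; rw [this]; rfl)
    (by have := H 1 1; rw [h1] at this; rw [this]; rfl)
  have l2 : p.2 2 = 2 := line_eq.2.1 _ (by have := H 0 2; rw [h0] at this; rw [this]; rfl)
    (by have := H 2 2; rw [h2] at this; rw [this]; rfl)
  have l0 : p.2 0 = 0 := line_eq.2.2 _ (by have := H 1 0; rw [h1] at this; rw [this]; rfl)
    (by have := H 2 0; rw [h2] at this; rw [this]; rfl)
  have ne : ∀ x y z : Fin 7, p.1 y = z → x ≠ y → p.1 x ≠ z := by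
    intro x y z hy hxy hx
    exact hxy (p.1.injective (hx.trans hy.symm))
  have h3 : p.1 3 = 3 := pt_eq.1 _ (by have := H 3 1; rw [l1] at this; rw [this]; rfl)
    (ne _ _ _ h0 (by decide)) (ne _ _ _ h1 (by decide))
  have h6 : p.1 6 = 6 := pt_eq.2.1 _ (by have := H 6 2; rw [l2] at this; rw [this]; rfl)
    (ne _ _ _ h0 (by decide)) (ne _ _ _ h2 (by decide))
  have h4 : p.1 4 = 4 := pt_eq.2.2.1 _ (by have := H 4 0; rw [l0] at this; rw [this]; rfl)
    (ne _ _ _ h1 (by decide)) (ne _ _ _ h2 (by decide))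
  have h5 : p.1 5 = 5 := pt_eq.2.2.2 _
    (ne _ _ _ h0 (by decide)) (ne _ _ _ h1 (by decide)) (ne _ _ _ h2 (by decide))
    (ne _ _ _ h3 (by decide)) (ne _ _ _ h4 (by decide)) (ne _ _ _ h6 (by decide))
  have hs : p.1 = 1 := by
    ext x : 1
    fin_cases x <;> assumption
  refine Prod.ext hs ?_
  ext y : 1
  refine line_ext _ _ fun x => ?_
  have := H x y
  rwa [hs] at this

lemma nonColl_map {p : Perm (Fin 7) × Perm (Fin 7)} (hp : p ∈ G₀) {x y z : Fin 7}
    (h : nonColl (x, y, z)) : nonColl (p.1 x, p.1 y, p.1 z) := by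
  intro l hl
  obtain ⟨m, rfl⟩ := p.2.surjective l
  simp only [inc_pres hp] at hl
  exact h m hl

lemma trans_word : ∀ x : Fin 7, ∃ l ∈ ([[], [0], [1], [2], [2, 0], [0, 1], [1, 2]] :
    List (List (Fin 3))), (word l).1 0 = x := by decide

lemma trans_word' : ∀ x : Fin 7, ∃ l ∈ ([[], [0], [1], [2], [1, 0], [2, 1], [0, 2]] :
    List (List (Fin 3))), (word l).2 0 = x := by decide

lemma trans_word_one : ∀ y : Fin 7, y ≠ 0 → ∃ l ∈ ([[], [0, 1, 0], [1, 2, 1],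
    [0, 2, 1, 2, 0], [2, 0, 2, 0, 1, 0], [0, 2, 1, 2, 1, 0]] :
    List (List (Fin 3))), (word l).1 0 = 0 ∧ (word l).1 1 = y := by decide

lemma trans_word_two : ∀ z : Fin 7, nonColl (0, 1, z) → ∃ l ∈ ([[], [2, 0, 2],
    [2, 1, 0, 1, 2], [2, 1, 0, 1, 0, 2]] : List (List (Fin 3))),
    (word l).1 0 = 0 ∧ (word l).1 1 = 1 ∧ (word l).1 2 = z := by decide

lemma nonColl_ne : ∀ y z : Fin 7, nonColl (0, y, z) → y ≠ 0 := by decide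

lemma trans_triple (x y z : Fin 7) (h : nonColl (x, y, z)) :
    ∃ p ∈ G₀, p.1 0 = x ∧ p.1 1 = y ∧ p.1 2 = z := by
  obtain ⟨l, -, rfl⟩ := trans_word x
  obtain ⟨y, rfl⟩ := (word l).1.surjective y
  obtain ⟨z, rfl⟩ := (word l).1.surjective z
  have h' : nonColl (0, y, z) := by
    simpa using nonColl_map (inv_mem (word_mem l)) h
  obtain ⟨m, -, hm0, rfl⟩ := trans_word_one y (nonColl_ne _ _ h')
  obtain ⟨z, rfl⟩ := (word m).1.surjective z
  have h'' : nonColl (0, 1, z) := by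
    have e : (word m).1⁻¹ 0 = 0 := by rw [Perm.inv_eq_iff_eq, hm0]
    have := nonColl_map (inv_mem (word_mem m)) h'
    simpa [e] using this
  obtain ⟨k, -, hk0, hk1, rfl⟩ := trans_word_two z h''
  refine ⟨word l * word m * word k,
    mul_mem (mul_mem (word_mem l) (word_mem m)) (word_mem k), ?_, ?_, ?_⟩ <;>
  simp [Perm.mul_apply, hk0, hk1, hm0]

lemma nonColl_base : nonColl (0, 1, 2) := by decide

/-- Evaluation on the base triple. -/
def baseMap (p : G₀) : {t : Fin 7 × Fin 7 × Fin 7 // nonColl t} :=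
  ⟨(p.1.1 0, p.1.1 1, p.1.1 2), nonColl_map p.2 nonColl_base⟩

lemma baseMap_bij : Function.Bijective baseMap := by
  constructor
  · intro p q h
    simp only [baseMap, Subtype.mk.injEq, Prod.mk.injEq] at h
    obtain ⟨h0, h1, h2⟩ := h
    have := rigid (p⁻¹ * q).2 (by simp [← h0]) (by simp [← h1]) (by simp [← h2])
    have h' : p⁻¹ * q = 1 := Subtype.ext this
    exact inv_mul_eq_one.1 h'
  · rintro ⟨⟨x, y, z⟩, h⟩
    obtain ⟨p, hp, h0, h1, h2⟩ := trans_triple x y z h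
    refine ⟨⟨p, hp⟩, ?_⟩
    simp [baseMap, h0, h1, h2]

set_option maxRecDepth 100000 in
lemma card_nonColl : Fintype.card {t : Fin 7 × Fin 7 × Fin 7 // nonColl t} = 168 := by
  decide

lemma card_G : Nat.card G₀ = 168 := by
  rw [Nat.card_congr (Equiv.ofBijective _ baseMap_bij), Nat.card_eq_fintype_card, card_nonColl]

lemma index_of (K : Subgroup G₀) (f : G₀ → Fin 7)
    (hf : ∀ p q, f p = f q ↔ p⁻¹ * q ∈ K) (hs : Function.Surjective f) : K.index = 7 := by
  have e : Function.Bijective (Quotient.lift f (s := QuotientGroup.leftRel K)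
      (fun p q h => (hf p q).2 (QuotientGroup.leftRel_apply.1 h))) := by
    constructor
    · intro p q
      induction p using Quotient.inductionOn
      induction q using Quotient.inductionOn
      intro h
      exact Quotient.sound (QuotientGroup.leftRel_apply.2 ((hf _ _).1 h))
    · intro y
      obtain ⟨p, hp⟩ := hs y
      exact ⟨Quotient.mk _ p, hp⟩
  have := Nat.card_congr (Equiv.ofBijective _ e)
  rw [Nat.card_eq_fintype_card (α := Fin 7), Fintype.card_fin] at this
  exact this

lemma index_A : A.index = 7 := by
  refine index_of A (fun p => p.1.1 0) (fun p q => ?_) fun x => ?_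
  · change _ ↔ (p.1.1⁻¹ * q.1.1) 0 = 0
    rw [Perm.mul_apply, Perm.inv_eq_iff_eq, eq_comm]
  · obtain ⟨l, -, h⟩ := trans_word x
    exact ⟨⟨word l, word_mem l⟩, h⟩

lemma index_B : B.index = 7 := by
  refine index_of B (fun p => p.1.2 0) (fun p q => ?_) fun x => ?_
  · change _ ↔ (p.1.2⁻¹ * q.1.2) 0 = 0
    rw [Perm.mul_apply, Perm.inv_eq_iff_eq, eq_comm]
  · obtain ⟨l, -, h⟩ := trans_word' x
    exact ⟨⟨word l, word_mem l⟩, h⟩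

/-- `G₀` has order 168, both coordinate actions on `Fin 7` are transitive, and the
stabilizers `A` and `B` each have order 24, hence index 7. -/
theorem order_transitive_stabilizers :
    Nat.card G₀ = 168 ∧
    (∀ x y : Fin 7, ∃ p ∈ G₀, p.1 x = y) ∧
    (∀ x y : Fin 7, ∃ p ∈ G₀, p.2 x = y) ∧
    Nat.card A = 24 ∧ Nat.card B = 24 ∧ A.index = 7 ∧ B.index = 7 := by
  have hA := A.card_mul_index
  have hB := B.card_mul_index
  rw [index_A, card_G] at hA
  rw [index_B, card_G] at hB
  refine ⟨card_G, fun x y => ?_, fun x y => ?_, by omega, by omega, index_A, index_B⟩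
  · obtain ⟨l, -, rfl⟩ := trans_word x
    obtain ⟨m, -, rfl⟩ := trans_word y
    exact ⟨word m * (word l)⁻¹, mul_mem (word_mem m) (inv_mem (word_mem l)), by simp⟩
  · obtain ⟨l, -, rfl⟩ := trans_word' x
    obtain ⟨m, -, rfl⟩ := trans_word' y
    exact ⟨word m * (word l)⁻¹, mul_mem (word_mem m) (inv_mem (word_mem l)), by simp⟩
end

section
/- The set of pairs of real numbers (a, b) satisfying simultaneously 3a² + 4b² = 1 and a² + 4ab + 2b² = 0 has exactly four elements. -/
/-- The system 3a² + 4b² = 1, a² + 4ab + 2b² = 0 has exactly four real solutions (a, b). -/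
theorem four_norm_preserving_coeffs :
    {ab : ℝ × ℝ | 3 * ab.1 ^ 2 + 4 * ab.2 ^ 2 = 1 ∧
      ab.1 ^ 2 + 4 * ab.1 * ab.2 + 2 * ab.2 ^ 2 = 0}.ncard = 4 := by
  obtain ⟨s, hs0, hs⟩ : ∃ s : ℝ, 0 < s ∧ s ^ 2 = 2 :=
    ⟨√2, by positivity, Real.sq_sqrt (by norm_num)⟩
  have hs1 : s < 3 / 2 := by nlinarith
  have key : ∀ c : ℝ, 0 < c → ∃ p : ℝ, 0 < p ∧ c * p ^ 2 = 1 := by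
    intro c hc
    refine ⟨√(1 / c), by positivity, ?_⟩
    rw [Real.sq_sqrt (by positivity)]
    field_simp
  obtain ⟨p, hp0, hp⟩ := key (22 - 12 * s) (by linarith)
  obtain ⟨q, hq0, hq⟩ := key (22 + 12 * s) (by linarith)
  have hpq : p ≠ q := by
    rintro rfl
    have : s * p ^ 2 = 0 := by linarith
    have : 0 < s * p ^ 2 := by positivity
    linarith
  have hset : {ab : ℝ × ℝ | 3 * ab.1 ^ 2 + 4 * ab.2 ^ 2 = 1 ∧
      ab.1 ^ 2 + 4 * ab.1 * ab.2 + 2 * ab.2 ^ 2 = 0} =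
      (({((-2 + s) * p, p), ((-2 + s) * (-p), -p), ((-2 - s) * q, q),
        ((-2 - s) * (-q), -q)} : Finset (ℝ × ℝ)) : Set (ℝ × ℝ)) := by
    ext ⟨a, b⟩
    simp only [Set.mem_setOf_eq, Finset.coe_insert, Finset.coe_singleton,
      Set.mem_insert_iff, Set.mem_singleton_iff, Prod.mk.injEq]
    constructor
    · rintro ⟨h1, h2⟩
      have h3 : (a - (-2 + s) * b) * (a - (-2 - s) * b) = 0 := by
        linear_combination h2 - b ^ 2 * hs
      rcases mul_eq_zero.mp h3 with h | h
      · have ha : a = (-2 + s) * b := by linarith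
        subst ha
        have h4 : (22 - 12 * s) * (b ^ 2 - p ^ 2) = 0 := by
          linear_combination h1 - hp - 3 * b ^ 2 * hs
        have h5 : b ^ 2 = p ^ 2 := by
          rcases mul_eq_zero.mp h4 with h | h <;> linarith
        rcases sq_eq_sq_iff_eq_or_eq_neg.mp h5 with rfl | rfl <;> simp
      · have ha : a = (-2 - s) * b := by linarith
        subst ha
        have h4 : (22 + 12 * s) * (b ^ 2 - q ^ 2) = 0 := by
          linear_combination h1 - hq - 3 * b ^ 2 * hs
        have h5 : b ^ 2 = q ^ 2 := by
          rcases mul_eq_zero.mp h4 with h | h <;> linarith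
        rcases sq_eq_sq_iff_eq_or_eq_neg.mp h5 with rfl | rfl <;> simp
    · rintro (⟨rfl, rfl⟩ | ⟨rfl, rfl⟩ | ⟨rfl, rfl⟩ | ⟨rfl, rfl⟩)
      · exact ⟨by linear_combination hp + 3 * b ^ 2 * hs, by linear_combination b ^ 2 * hs⟩
      · exact ⟨by linear_combination hp + 3 * p ^ 2 * hs, by linear_combination p ^ 2 * hs⟩
      · exact ⟨by linear_combination hq + 3 * b ^ 2 * hs, by linear_combination b ^ 2 * hs⟩
      · exact ⟨by linear_combination hq + 3 * q ^ 2 * hs, by linear_combination q ^ 2 * hs⟩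
  have e1 : p ≠ -p := by intro h; linarith
  have e2 : p ≠ -q := by intro h; linarith
  have e3 : -p ≠ q := by intro h; linarith
  have e4 : -p ≠ -q := by intro h; exact hpq (by linarith)
  have e5 : q ≠ -q := by intro h; linarith
  rw [hset, Set.ncard_coe_finset, Finset.card_insert_of_notMem, Finset.card_insert_of_notMem,
    Finset.card_insert_of_notMem, Finset.card_singleton]
  · simp only [Finset.mem_singleton, Prod.mk.injEq]; tauto
  · simp only [Finset.mem_insert, Finset.mem_singleton, Prod.mk.injEq]; tauto
  · simp only [Finset.mem_insert, Finset.mem_singleton, Prod.mk.injEq]; tauto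
end
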